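/- arXiv:1809.01734 — 5 statements merged into one kernel-verified Lean document; each statement's English description precedes it below -/
import Mathlib

section
/- Let C be a category with finite limits that is locally cartesian closed, and let p : E ⟶ B be a morphism. Then the following are equivalent: (1) p is an isomorphism (equivalently, p is a terminal object of the slice category C/B); (2) the structure morphism isContr_B(E) ⟶ B is an isomorphism; (3) the structure morphism isContr_B(E) ⟶ B admits a section, i.e. there exists a morphism from the terminal object id_B of C/B to isContr_B(E) in C/B. -/
/-!
A morphism `T ⟶ isContr_B(E)` over `B` is the same as a morphism `e : T ⟶ E` over `B` that is a
generalized center of contraction: for `t` in `T`, every `x` in `E` with `p x = p (e t)` equals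
`e t`. Indeed `π₂^* e` is the object of pairs `(t, x)` with `p x = p (e t)`, mapping to
`(x, e t)`, and by the adjunction `π₂^* ⊣ (π₂)_*` a lift of `e` to `(π₂)_* Δ_p` is a factorization
of this map through the diagonal. For `T = B` this exhibits sections of `isContr_B(E)` as two-sided
inverses of `p`. Moreover centers of contraction are unique, so `isContr_B(E) ⟶ B` is a
monomorphism, and a monomorphism with a section is an isomorphism.
-/

open CategoryTheory Limits

/-- The internal object of contractibility `isContr_B(E) := p_! ((π₂)_* (Δ_p))` of a morphism
`p : E ⟶ B`, defined in a finitely complete category equipped with pushforward functors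
(right adjoints to base change). -/
noncomputable def isContrObj {C : Type*} [Category C] [HasFiniteLimits C]
    (pushforward : ∀ {X Y : C} (f : X ⟶ Y), Over X ⥤ Over Y)
    {E B : C} (p : E ⟶ B) : Over B :=
  (Over.map p).obj ((pushforward (pullback.snd p p)).obj (Over.mk (pullback.diagonal p)))

section Over

variable {C : Type*} [Category C]

theorem isSubterminal_over_iff_mono_hom {X : C} {Y : Over X} : IsSubterminal Y ↔ Mono Y.hom := by
  refine ⟨fun hY => ⟨fun t t' h => ?_⟩, fun _ _ f g => ?_⟩
  · have hlift := hY (Over.homMk t : Over.mk (t ≫ Y.hom) ⟶ Y) (Over.homMk t' h.symm)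
    exact congrArg CommaMorphism.left hlift
  · ext
    rw [← cancel_mono Y.hom, Over.w, Over.w]

theorem isSubterminal_obj_of_adjunction {D : Type*} [Category D] {F : C ⥤ D} {G : D ⥤ C}
    (adj : F ⊣ G) {A : D} (hA : IsSubterminal A) : IsSubterminal (G.obj A) :=
  fun _ _ _ => (adj.homEquiv _ _).symm.injective (hA _ _)

theorem nonempty_hom_over_map_obj_iff {E B : C} {p : E ⟶ B} {X : Over B} {Q : Over E} :
    Nonempty (X ⟶ (Over.map p).obj Q) ↔
      ∃ e : X.left ⟶ E, e ≫ p = X.hom ∧ Nonempty (Over.mk e ⟶ Q) := by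
  constructor
  · rintro ⟨s⟩
    exact ⟨s.left ≫ Q.hom, (Category.assoc _ _ _).trans (Over.w s), ⟨Over.homMk s.left⟩⟩
  · rintro ⟨e, he, ⟨t⟩⟩
    have ht : t.left ≫ Q.hom = e := Over.w t
    exact ⟨Over.homMk t.left (by simp [reassoc_of% ht, he])⟩

theorem isIso_hom_iff_nonempty_section {X : C} (Y : Over X) [Mono Y.hom] :
    IsIso Y.hom ↔ Nonempty (Over.mk (𝟙 X) ⟶ Y) := by
  constructor
  · intro _
    exact ⟨Over.homMk (inv Y.hom)⟩
  · rintro ⟨s⟩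
    have : IsSplitEpi Y.hom := ⟨⟨⟨s.left, Over.w s⟩⟩⟩
    exact isIso_of_mono_of_isSplitEpi Y.hom

theorem nonempty_hom_mk_diagonal_iff {E B : C} {p : E ⟶ B} [HasPullback p p]
    {X : Over (pullback p p)} :
    Nonempty (X ⟶ Over.mk (pullback.diagonal p)) ↔
      X.hom ≫ pullback.fst p p = X.hom ≫ pullback.snd p p := by
  constructor
  · rintro ⟨f⟩
    have hf : f.left ≫ pullback.diagonal p = X.hom := Over.w f
    simp [← hf]
  · intro h
    exact ⟨Over.homMk (X.hom ≫ pullback.fst p p) (by ext <;> simp [h])⟩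

end Over

/-- `e : T ⟶ E` is a (generalized) center of contraction of `p : E ⟶ B`: internally,
`∀ t : T, ∀ x : E, p x = p (e t) → x = e t`. The quantifiers are interpreted by generalized
elements, which avoids choosing a pullback of `p` along `e ≫ p`. -/
def IsCenterOfContraction {C : Type*} [Category C] {E B T : C} (p : E ⟶ B) (e : T ⟶ E) : Prop :=
  ∀ ⦃Z : C⦄ (x : Z ⟶ E) (t : Z ⟶ T), x ≫ p = t ≫ e ≫ p → x = t ≫ e

namespace IsCenterOfContraction

variable {C : Type*} [Category C] {E B : C} {p : E ⟶ B}

theorem mono_comp {T : C} {e : T ⟶ E} [Mono e] (he : IsCenterOfContraction p e) :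
    Mono (e ≫ p) where
  right_cancellation t t' h := by
    have heq : t ≫ e = t' ≫ e := he (t ≫ e) t' (by simpa using h)
    exact (cancel_mono e).mp heq

theorem iff_comp_eq_id {e : B ⟶ E} (he : e ≫ p = 𝟙 B) :
    IsCenterOfContraction p e ↔ p ≫ e = 𝟙 E := by
  constructor
  · intro hcenter
    exact (hcenter (𝟙 E) p (by simp [he])).symm
  · intro hpe Z x b hxb
    calc x = (x ≫ p) ≫ e := by rw [Category.assoc, hpe, Category.comp_id]
      _ = b ≫ e := by rw [hxb, he, Category.comp_id]

theorem iff_pullback_snd_comp_fst_eq {T : C} {e : T ⟶ E} [HasPullback p p]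
    [HasPullback e (pullback.snd p p)] :
    IsCenterOfContraction p e ↔
      pullback.snd e (pullback.snd p p) ≫ pullback.fst p p =
        pullback.snd e (pullback.snd p p) ≫ pullback.snd p p := by
  rw [← pullback.condition]
  constructor
  · intro hcenter
    apply hcenter
    rw [Category.assoc, pullback.condition, pullback.condition_assoc]
  · intro h Z x t hxt
    let pair : Z ⟶ pullback p p := pullback.lift x (t ≫ e) (by simpa using hxt)
    have hfst : pair ≫ pullback.fst p p = x := pullback.lift_fst _ _ _
    have hsnd : t ≫ e = pair ≫ pullback.snd p p := (pullback.lift_snd _ _ _).symm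
    calc x = pullback.lift t pair hsnd ≫ pullback.snd e (pullback.snd p p) ≫ pullback.fst p p := by
          rw [pullback.lift_snd_assoc, hfst]
      _ = t ≫ e := by rw [h, pullback.lift_fst_assoc]

end IsCenterOfContraction

/-- The object `p_! (R Δ_p)` of `C/B`. It is `isContr_B(E)` when `R` is the pushforward along
`π₂ : E ×_B E ⟶ E`, the only pushforward entering that construction. -/
noncomputable def isContrObjOf {C : Type*} [Category C] {E B : C} (p : E ⟶ B) [HasPullback p p]
    (R : Over (pullback p p) ⥤ Over E) : Over B :=
  (Over.map p).obj (R.obj (Over.mk (pullback.diagonal p)))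

section Contractibility

variable {C : Type*} [Category C] {E B : C} {p : E ⟶ B}

theorem isIso_iff_exists_section_isCenterOfContraction :
    IsIso p ↔ ∃ e : B ⟶ E, e ≫ p = 𝟙 B ∧ IsCenterOfContraction p e := by
  constructor
  · intro _
    have hinv : inv p ≫ p = 𝟙 B := IsIso.inv_hom_id p
    exact ⟨inv p, hinv, (IsCenterOfContraction.iff_comp_eq_id hinv).mpr (IsIso.hom_inv_id p)⟩
  · rintro ⟨e, he, hcenter⟩
    exact ⟨e, (IsCenterOfContraction.iff_comp_eq_id he).mp hcenter, he⟩

variable [HasPullback p p] [HasPullbacksAlong (pullback.snd p p)]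

theorem nonempty_pullback_snd_hom_mk_diagonal_iff {X : Over E} :
    Nonempty ((Over.pullback (pullback.snd p p)).obj X ⟶ Over.mk (pullback.diagonal p)) ↔
      IsCenterOfContraction p X.hom :=
  nonempty_hom_mk_diagonal_iff.trans IsCenterOfContraction.iff_pullback_snd_comp_fst_eq.symm

variable {R : Over (pullback p p) ⥤ Over E} (adj : Over.pullback (pullback.snd p p) ⊣ R)
include adj

theorem nonempty_hom_pushforward_diagonal_iff {X : Over E} :
    Nonempty (X ⟶ R.obj (Over.mk (pullback.diagonal p))) ↔ IsCenterOfContraction p X.hom :=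
  (adj.homEquiv _ _).nonempty_congr.symm.trans nonempty_pullback_snd_hom_mk_diagonal_iff

theorem nonempty_hom_isContrObjOf_iff {X : Over B} :
    Nonempty (X ⟶ isContrObjOf p R) ↔
      ∃ e : X.left ⟶ E, e ≫ p = X.hom ∧ IsCenterOfContraction p e := by
  simp only [isContrObjOf, nonempty_hom_over_map_obj_iff, nonempty_hom_pushforward_diagonal_iff adj,
    Over.mk_hom]

theorem mono_isContrObjOf_hom : Mono (isContrObjOf p R).hom := by
  let Q := R.obj (Over.mk (pullback.diagonal p))
  have hdiag : IsSubterminal (Over.mk (pullback.diagonal p)) :=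
    isSubterminal_over_iff_mono_hom.mpr (inferInstanceAs (Mono (pullback.diagonal p)))
  have : Mono Q.hom :=
    isSubterminal_over_iff_mono_hom.mp (isSubterminal_obj_of_adjunction adj hdiag)
  have hcenter : IsCenterOfContraction p Q.hom :=
    (nonempty_hom_pushforward_diagonal_iff adj).mp ⟨𝟙 Q⟩
  exact hcenter.mono_comp

theorem isContr_characterizes_contractibility_general :
    (IsIso p ↔ IsIso (isContrObjOf p R).hom) ∧
    (IsIso (isContrObjOf p R).hom ↔ Nonempty (Over.mk (𝟙 B) ⟶ isContrObjOf p R)) := by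
  have := mono_isContrObjOf_hom adj
  have hsection := isIso_hom_iff_nonempty_section (isContrObjOf p R)
  have hp : IsIso p ↔ Nonempty (Over.mk (𝟙 B) ⟶ isContrObjOf p R) :=
    isIso_iff_exists_section_isCenterOfContraction.trans
      (nonempty_hom_isContrObjOf_iff adj (X := Over.mk (𝟙 B))).symm
  exact ⟨hp.trans hsection.symm, hsection⟩

end Contractibility

/-- In a locally cartesian closed category with finite limits, for a morphism `p : E ⟶ B`
the following are equivalent: `p` is an isomorphism (i.e. a terminal object of `C/B`);
the structure morphism `isContr_B(E) ⟶ B` is an isomorphism; the structure morphism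
`isContr_B(E) ⟶ B` admits a section, i.e. there is a morphism `id_B ⟶ isContr_B(E)`
in `C/B`. -/
theorem isContr_characterizes_contractibility
    {C : Type*} [Category C] [HasFiniteLimits C]
    (pushforward : ∀ {X Y : C} (f : X ⟶ Y), Over X ⥤ Over Y)
    (adj : ∀ {X Y : C} (f : X ⟶ Y), Over.pullback f ⊣ pushforward f)
    {E B : C} (p : E ⟶ B) :
    (IsIso p ↔ IsIso (isContrObj pushforward p).hom) ∧
    (IsIso (isContrObj pushforward p).hom ↔
      Nonempty (Over.mk (𝟙 B) ⟶ isContrObj pushforward p)) := by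
  exact isContr_characterizes_contractibility_general (adj (pullback.snd p p))
end

section
/- Let C be a category with finite limits that is locally cartesian closed, let p : E ⟶ B be a morphism, and let g : A ⟶ B be any morphism. Then there is an isomorphism g^*(isContr_B(E)) ≅ isContr_A(A ×_B E) in the slice category C/A, where A ×_B E ⟶ A denotes the base change of p along g. In other words, the formation of the internal object of contractibility is stable under base change. -/
/-!
Let `p' : E' ⟶ A` be the base change of `p` along `g`, let `g' : E' ⟶ E` be the other projection
and let `k : E' ×_A E' ⟶ E ×_B E` be induced by `g'`. The squares from `p'` to `p`, from the second
projection of `E' ×_A E'` to that of `E ×_B E`, and from `Δ_{p'}` to `Δ_p` are all pullbacks, so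
`g^* p_! (π₂)_* Δ_p ≅ p'_! g'^* (π₂)_* Δ_p ≅ p'_! (π₂')_* k^* Δ_p ≅ p'_! (π₂')_* Δ_{p'}`. The first
step is the Beck–Chevalley isomorphism for `_!`, and the second is its conjugate under the
adjunctions `f_! ⊣ f^* ⊣ f_*`.
-/

open CategoryTheory Limits

section PullbackSquares

variable {C : Type*} [Category C]

lemma isPullback_map_snd {X Y S X' Y' S' : C} {f : X ⟶ S} {g : Y ⟶ S} {f' : X' ⟶ S'}
    {g' : Y' ⟶ S'} [HasPullback f g] [HasPullback f' g'] {i : X' ⟶ X} {j : Y' ⟶ Y} {k : S' ⟶ S}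
    (h : IsPullback i f' f k) (w : g' ≫ k = j ≫ g) :
    IsPullback (pullback.map f' g' f g i j k h.w.symm w) (pullback.snd f' g')
      (pullback.snd f g) j :=
  .paste_twist_right h (.of_hasPullback f g) g' j w (pullback.fst f' g') (pullback.snd f' g')
    (.of_hasPullback f' g') (pullback.lift_fst _ _ _) (pullback.lift_snd _ _ _)

lemma isPullback_diagonal {X S X' S' : C} {f : X ⟶ S} {f' : X' ⟶ S'}
    [HasPullback f f] [HasPullback f' f'] {i : X' ⟶ X} {k : S' ⟶ S} (h : IsPullback i f' f k) :
    IsPullback i (pullback.diagonal f') (pullback.diagonal f)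
      (pullback.map f' f' f f i i k h.w.symm h.w.symm) := by
  have outer : IsPullback i (pullback.diagonal f' ≫ pullback.snd f' f')
      (pullback.diagonal f ≫ pullback.snd f f) i := by
    simpa only [pullback.diagonal_snd] using IsPullback.id_vert i
  have comm : i ≫ pullback.diagonal f =
      pullback.diagonal f' ≫ pullback.map f' f' f f i i k h.w.symm h.w.symm := by
    have map_fst : pullback.map f' f' f f i i k h.w.symm h.w.symm ≫ pullback.fst f f =
        pullback.fst f' f' ≫ i := pullback.lift_fst _ _ _
    have map_snd : pullback.map f' f' f f i i k h.w.symm h.w.symm ≫ pullback.snd f f =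
        pullback.snd f' f' ≫ i := pullback.lift_snd _ _ _
    ext <;> simp [map_fst, map_snd]
  exact .of_bot outer comm (isPullback_map_snd h h.w.symm)

end PullbackSquares

section OverPullback

variable {C : Type*} [Category C] {Y Z : C} {g : Y ⟶ Z} [HasPullbacksAlong g]

/-- The identification of `g^* U` with any `V : Over Y` that completes `U` and `g` to a pullback
square. -/
noncomputable def overPullbackObjIso {U : Over Z} {V : Over Y} {fst : V.left ⟶ U.left}
    (h : IsPullback fst V.hom U.hom g) : (Over.pullback g).obj U ≅ V :=
  Over.isoMk h.isoPullback.symm h.isoPullback_inv_snd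

lemma overPullbackObjIso_inv_naturality {U U' : Over Z} {V V' : Over Y}
    {fst : V.left ⟶ U.left} {fst' : V'.left ⟶ U'.left}
    (h : IsPullback fst V.hom U.hom g) (h' : IsPullback fst' V'.hom U'.hom g)
    {u : U ⟶ U'} {v : V ⟶ V'} (w : v.left ≫ fst' = fst ≫ u.left) :
    v ≫ (overPullbackObjIso h').inv = (overPullbackObjIso h).inv ≫ (Over.pullback g).map u := by
  have map_fst : ((Over.pullback g).map u).left ≫ pullback.fst U'.hom g =
      pullback.fst U.hom g ≫ u.left := pullback.lift_fst _ _ _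
  have map_snd : ((Over.pullback g).map u).left ≫ pullback.snd U'.hom g =
      pullback.snd U.hom g := pullback.lift_snd _ _ _
  ext : 1
  apply pullback.hom_ext
  · simp [overPullbackObjIso, map_fst, w, -Over.pullback_map_left]
  · simp [overPullbackObjIso, map_snd, -Over.pullback_map_left]

end OverPullback

section BeckChevalley

variable {C : Type*} [Category C] {P X Y Z : C} {fst : P ⟶ X} {snd : P ⟶ Y} {f : X ⟶ Z}
  {g : Y ⟶ Z} [HasPullbacksAlong g] [HasPullbacksAlong fst]

/-- The Beck–Chevalley isomorphism `snd_! fst^* ≅ g^* f_!` of a pullback square. -/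
noncomputable def overPullbackMapIso (h : IsPullback fst snd f g) :
    Over.pullback fst ⋙ Over.map snd ≅ Over.map f ⋙ Over.pullback g :=
  NatIso.ofComponents
    (fun U ↦ (overPullbackObjIso (U := (Over.map f).obj U)
      ((IsPullback.of_hasPullback U.hom fst).paste_vert h)).symm)
    (fun _ ↦ overPullbackObjIso_inv_naturality _ _ (pullback.lift_fst _ _ _))

/-- The Beck–Chevalley isomorphism `f^* g_* ≅ fst_* snd^*` of a pullback square, for any right
adjoints `g_*` of `g^*` and `fst_*` of `fst^*`. -/
noncomputable def overPushforwardPullbackIso [HasPullbacksAlong f] [HasPullbacksAlong snd]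
    (h : IsPullback fst snd f g) {R : Over Y ⥤ Over Z} (adj : Over.pullback g ⊣ R)
    {R' : Over P ⥤ Over X} (adj' : Over.pullback fst ⊣ R') :
    R ⋙ Over.pullback f ≅ Over.pullback snd ⋙ R' :=
  conjugateIsoEquiv ((Over.mapPullbackAdj f).comp adj) (adj'.comp (Over.mapPullbackAdj snd))
    (overPullbackMapIso h)

end BeckChevalley

theorem isContr_baseChange_stable_general
    {C : Type*} [Category C] [HasFiniteLimits C]
    (pushforward : ∀ {X Y : C} (_ : X ⟶ Y), Over X ⥤ Over Y)
    {E B E' A : C} {p : E ⟶ B} {g : A ⟶ B} {p' : E' ⟶ A} {g' : E' ⟶ E}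
    (h : IsPullback p' g' g p)
    (adj : Over.pullback (pullback.snd p p) ⊣ pushforward (pullback.snd p p))
    (adj' : Over.pullback (pullback.snd p' p') ⊣ pushforward (pullback.snd p' p')) :
    Nonempty ((Over.pullback g).obj (isContrObj pushforward p) ≅ isContrObj pushforward p') := by
  let k : pullback p' p' ⟶ pullback p p := pullback.map p' p' p p g' g' g h.w h.w
  let Δ : Over (pullback p p) := Over.mk (pullback.diagonal p)
  let diagonalIso : (Over.pullback k).obj Δ ≅ Over.mk (pullback.diagonal p') :=
    overPullbackObjIso (isPullback_diagonal h.flip)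
  have projSquare : IsPullback (pullback.snd p' p') k g' (pullback.snd p p) :=
    (isPullback_map_snd h.flip h.w).flip
  let pushforwardIso : (Over.pullback g').obj ((pushforward (pullback.snd p p)).obj Δ) ≅
      (pushforward (pullback.snd p' p')).obj (Over.mk (pullback.diagonal p')) :=
    (overPushforwardPullbackIso projSquare adj adj').app Δ ≪≫
      (pushforward (pullback.snd p' p')).mapIso diagonalIso
  exact ⟨(overPullbackMapIso h.flip).symm.app _ ≪≫ (Over.map p').mapIso pushforwardIso⟩

/-- In a locally cartesian closed category with finite limits, the formation of the internal
object of contractibility is stable under base change: for `p : E ⟶ B` and `g : A ⟶ B`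
there is an isomorphism `g^*(isContr_B(E)) ≅ isContr_A(A ×_B E)` in `C/A`, where
`A ×_B E ⟶ A` is the base change `pullback.fst g p` of `p` along `g`. -/
theorem isContr_baseChange_stable
    {C : Type*} [Category C] [HasFiniteLimits C]
    (pushforward : ∀ {X Y : C} (f : X ⟶ Y), Over X ⥤ Over Y)
    (adj : ∀ {X Y : C} (f : X ⟶ Y), Over.pullback f ⊣ pushforward f)
    {E B A : C} (p : E ⟶ B) (g : A ⟶ B) :
    Nonempty ((Over.pullback g).obj (isContrObj pushforward p) ≅
      isContrObj pushforward (pullback.fst g p)) :=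
  isContr_baseChange_stable_general pushforward (.of_hasPullback g p) (adj _) (adj _)
end

section
/- Every Peano natural number object in the category of types is a Lawvere natural number object: if N is a type, o : N, and s : N → N are such that s is injective, o is not in the image of s, and for every predicate P on N with P o and (∀ n, P n → P (s n)) one has P n for all n, then for every type X, every b : X and every u : X → X there exists a unique function f : N → X with f o = b and f (s n) = u (f n) for all n : N. -/
/-!
Recursion is reduced to induction through graphs: the least relation containing `(o, b)` and
closed under `(n, x) ↦ (s n, u n x)` is total by induction. Since `o` is not a successor and `s` is
injective, each pair in it arises in only one way, so it is also single-valued, and it is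
therefore the graph of the function sought.
-/

section PeanoRecursion

variable {N : Type*} {o : N} {s : N → N} {X : N → Sort*} {b : X o} {u : ∀ n, X n → X (s n)}

/-- The graph of the function defined by recursion from the value `b` at `o` and the step `u`, as
the least relation with the two closure properties. The codomain `X n` may depend on the argument
`n`, so that the recursion is that of a dependent eliminator. -/
inductive RecGraph (o : N) (s : N → N) (b : X o) (u : ∀ n, X n → X (s n)) : ∀ n, X n → Prop
  | base : RecGraph o s b u o b
  | step {n : N} {x : X n} (h : RecGraph o s b u n x) : RecGraph o s b u (s n) (u n x)

namespace RecGraph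

-- `HEq` is needed because the type of `x` changes along the equations for `n`.
theorem base_or_step {n : N} {x : X n} (h : RecGraph o s b u n x) :
    (n = o ∧ x ≍ b) ∨ ∃ m y, RecGraph o s b u m y ∧ n = s m ∧ x ≍ u m y := by
  cases h with
  | base => exact .inl ⟨rfl, .rfl⟩
  | step h => exact .inr ⟨_, _, h, rfl, .rfl⟩

theorem eq_base (ho : o ∉ Set.range s) {x : X o} (h : RecGraph o s b u o x) : x = b := by
  obtain ⟨-, hx⟩ | ⟨m, -, -, hm, -⟩ := h.base_or_step
  · exact eq_of_heq hx
  · exact absurd ⟨m, hm.symm⟩ ho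

theorem exists_eq_step (hs : Function.Injective s) (ho : o ∉ Set.range s) {n : N} {x : X (s n)}
    (h : RecGraph o s b u (s n) x) : ∃ y, RecGraph o s b u n y ∧ x = u n y := by
  obtain ⟨hn, -⟩ | ⟨m, y, hy, hm, hx⟩ := h.base_or_step
  · exact absurd ⟨n, hn⟩ ho
  · obtain rfl := hs hm
    exact ⟨y, hy, eq_of_heq hx⟩

theorem existsUnique (hs : Function.Injective s) (ho : o ∉ Set.range s)
    (hind : ∀ P : N → Prop, P o → (∀ n, P n → P (s n)) → ∀ n, P n) (n : N) :
    ∃! x, RecGraph o s b u n x := by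
  refine hind (fun n => ∃! x, RecGraph o s b u n x) ⟨b, base, fun _ h => h.eq_base ho⟩ ?_ n
  rintro n ⟨x, hx, x_unique⟩
  refine ⟨u n x, step hx, fun z hz => ?_⟩
  obtain ⟨y, hy, rfl⟩ := hz.exists_eq_step hs ho
  rw [x_unique y hy]

end RecGraph

theorem eq_of_forall_succ_eq
    (hind : ∀ P : N → Prop, P o → (∀ n, P n → P (s n)) → ∀ n, P n) {f g : ∀ n, X n}
    (h_zero : f o = g o) (hf : ∀ n, f (s n) = u n (f n)) (hg : ∀ n, g (s n) = u n (g n)) :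
    f = g :=
  funext <| hind (fun n => f n = g n) h_zero fun n hn => by rw [hf, hg, hn]

theorem peano_nno_is_lawvere_nno_general (hs : Function.Injective s) (ho : o ∉ Set.range s)
    (hind : ∀ P : N → Prop, P o → (∀ n, P n → P (s n)) → ∀ n, P n)
    (b : X o) (u : ∀ n, X n → X (s n)) :
    ∃! f : ∀ n, X n, f o = b ∧ ∀ n, f (s n) = u n (f n) := by
  choose f f_graph f_unique using RecGraph.existsUnique (b := b) (u := u) hs ho hind
  have f_zero : f o = b := (f_graph o).eq_base ho
  have f_succ (n : N) : f (s n) = u n (f n) := (f_unique _ _ (f_graph n).step).symm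
  refine ⟨f, ⟨f_zero, f_succ⟩, ?_⟩
  rintro g ⟨g_zero, g_succ⟩
  exact eq_of_forall_succ_eq hind (g_zero.trans f_zero.symm) g_succ f_succ

end PeanoRecursion

/-- Every Peano natural number object in the category of types is a Lawvere natural number
object: if `s` is injective, `o` is not in the image of `s`, and induction holds, then for
every `(X, b, u)` there is a unique `f : N → X` with `f o = b` and `f (s n) = u (f n)`. -/
theorem peano_nno_is_lawvere_nno {N : Type*} (o : N) (s : N → N)
    (hs : Function.Injective s)
    (ho : o ∉ Set.range s)
    (hind : ∀ P : N → Prop, P o → (∀ n, P n → P (s n)) → ∀ n, P n)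
    (X : Type*) (b : X) (u : X → X) :
    ∃! f : N → X, f o = b ∧ ∀ n, f (s n) = u (f n) :=
  peano_nno_is_lawvere_nno_general (X := fun _ => X) hs ho hind b fun _ => u
end

section
/- Every Freyd natural number object in the category of types is a Peano natural number object: if N is a type, o : N, and s : N → N are such that the map Unit ⊕ N → N sending the unique point to o and n to s n is a bijection, and the equivalence relation on N generated by the pairs (n, s n) is the total relation, then s is injective, o is not in the image of s, and for every predicate P on N with P o and (∀ n, P n → P (s n)), P holds of every element of N. -/
/-!
For a relation in which every element has at most one predecessor, the component of an element
without predecessors consists of what is reachable from it: reachability is preserved by following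
an edge forwards, and also backwards, as the last edge of a path determines its source. The graph
of `s` is such a relation when `s` is injective, and `o` has no predecessor when it is not a value
of `s`; a path from `o` to `n` is then an induction reaching `n`.
-/

section Reachability

variable {α : Type*} {r : α → α → Prop} {a b c : α}

theorem reflTransGen_iff_of_leftUnique (hr : Relator.LeftUnique r) (ha : ∀ x, ¬ r x a)
    (hbc : r b c) : Relation.ReflTransGen r a b ↔ Relation.ReflTransGen r a c := by
  refine ⟨fun hab => hab.tail hbc, fun hac => ?_⟩
  cases hac with
  | refl => exact absurd hbc (ha b)
  | tail hax hxc => exact hr hxc hbc ▸ hax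

theorem reflTransGen_of_eqvGen_of_leftUnique (hr : Relator.LeftUnique r) (ha : ∀ x, ¬ r x a)
    (hab : Relation.EqvGen r a b) : Relation.ReflTransGen r a b := by
  have reachable_iff {x y : α} (hxy : Relation.EqvGen r x y) :
      Relation.ReflTransGen r a x ↔ Relation.ReflTransGen r a y := by
    induction hxy with
    | rel x y hxy => exact reflTransGen_iff_of_leftUnique hr ha hxy
    | refl x => exact Iff.rfl
    | symm x y _ ih => exact ih.symm
    | trans x y z _ _ ihxy ihyz => exact ihxy.trans ihyz
  exact (reachable_iff hab).1 .refl

end Reachability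

/-- Every Freyd natural number object in the category of types is a Peano natural number
object: if `Unit ⊕ N → N`, sending the point to `o` and `n` to `s n`, is a bijection, and the
equivalence relation generated by the pairs `(n, s n)` is total, then `s` is injective, `o` is
not in the image of `s`, and the induction principle holds. -/
theorem freyd_nno_is_peano_nno {N : Type*} (o : N) (s : N → N)
    (h1 : Function.Bijective (Sum.elim (fun _ : Unit => o) s))
    (h2 : ∀ a b : N, Relation.EqvGen (fun n m => m = s n) a b) :
    Function.Injective s ∧ o ∉ Set.range s ∧
      ∀ P : N → Prop, P o → (∀ n, P n → P (s n)) → ∀ n, P n := by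
  obtain ⟨-, s_injective, o_ne_s⟩ := Sum.elim_injective.1 h1.injective
  refine ⟨s_injective, fun ⟨n, hn⟩ => o_ne_s () n hn.symm, fun P base step n => ?_⟩
  have reachable : Relation.ReflTransGen (fun n m => m = s n) o n :=
    reflTransGen_of_eqvGen_of_leftUnique
      (fun _ _ _ hac hbc => s_injective (hac.symm.trans hbc)) (o_ne_s ()) (h2 o n)
  induction reachable with
  | refl => exact base
  | tail _ hsucc ih => exact hsucc ▸ step _ ih
end

section
/- Every Lawvere natural number object in the category of types is a Freyd natural number object: if N is a type, o : N, and s : N → N are such that for every type X, every b : X and every u : X → X there exists a unique function f : N → X with f o = b and f (s n) = u (f n) for all n, then the map Unit ⊕ N → N sending the unique point to o and n to s n is a bijection, and the equivalence relation on N generated by the pairs (n, s n) is the total relation on N. -/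
/-!
Recursion into `ℕ` gives a rank function `r` that counts applications of `s`. To see that `o`
reaches a given `x`, call `n` an ancestor of `x` if `s^[k] n = x` for some `k`. Ranks grow strictly
along `s`, so `s n` is an ancestor of `x` exactly when `n` is one and `r n ≠ r x`. Hence
`n ↦ (r n, n is an ancestor of x)` is defined by recursion into `ℕ × Prop`; if `o` were not an
ancestor of `x`, then by uniqueness nothing would be, not even `x`. The Peano axioms follow, and
from them both of Freyd's conditions.
-/

universe u v w

/-- The Lawvere notion of natural number object `(N, o, s)`, as initiality among the sets with a
point and an endomap. The universe `v` of the targets is independent of the universe of `N`, so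
`N` itself need not be an admissible target. -/
def IsLawvereNNO {N : Type u} (o : N) (s : N → N) : Prop :=
  ∀ (X : Type v) (b : X) (t : X → X), ∃! f : N → X, f o = b ∧ ∀ n, f (s n) = t (f n)

/-- The Peano notion of natural number object `(N, o, s)`, with induction for arbitrary
predicates. It is the intermediate notion between those of Lawvere and Freyd. -/
structure IsPeanoNNO {N : Type u} (o : N) (s : N → N) : Prop where
  succ_ne_zero : ∀ n, s n ≠ o
  succ_injective : Function.Injective s
  induction : ∀ P : N → Prop, P o → (∀ n, P n → P (s n)) → ∀ n, P n

/-- The Freyd natural number objects `(N, o, s)`. The coequalizer of `s` and the identity is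
encoded as the equivalence relation generated by the pairs `(n, s n)`. -/
structure IsFreydNNO {N : Type u} (o : N) (s : N → N) : Prop where
  bijective_sumElim : Function.Bijective (Sum.elim (fun _ : Unit => o) s)
  eqvGen_total : ∀ a b : N, Relation.EqvGen (fun n m => m = s n) a b

section Rank

variable {N : Type u} {s : N → N} {r : N → ℕ}

theorem rank_iterate (hr : ∀ n, r (s n) = r n + 1) (k : ℕ) (n : N) : r (s^[k] n) = r n + k := by
  have hsemi : Function.Semiconj r s Nat.succ := hr
  rw [(hsemi.iterate_right k).eq, Nat.succ_iterate]

theorem exists_iterate_succ_eq_iff (hr : ∀ n, r (s n) = r n + 1) (n x : N) :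
    (∃ k, s^[k] (s n) = x) ↔ (∃ k, s^[k] n = x) ∧ r n ≠ r x := by
  constructor
  · rintro ⟨k, rfl⟩
    have hrank : r (s^[k] (s n)) = r n + 1 + k := by rw [rank_iterate hr, hr]
    exact ⟨⟨k + 1, Function.iterate_succ_apply s k n⟩, by omega⟩
  · rintro ⟨⟨_ | k, hk⟩, hne⟩
    · exact absurd (congrArg r hk) hne
    · exact ⟨k, hk⟩

end Rank

namespace IsLawvereNNO

variable {N : Type u} {o : N} {s : N → N}

theorem of_max_universe (h : IsLawvereNNO.{u, max v w} o s) : IsLawvereNNO.{u, v} o s := by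
  intro X b t
  obtain ⟨f, ⟨hfo, hfs⟩, hunique⟩ := h (ULift.{w} X) ⟨b⟩ (ULift.map t)
  refine ⟨fun n => (f n).down, ⟨congrArg ULift.down hfo, fun n => congrArg ULift.down (hfs n)⟩, ?_⟩
  rintro g ⟨hgo, hgs⟩
  have hlift : (fun n => ULift.up (g n)) = f :=
    hunique _ ⟨congrArg ULift.up hgo, fun n => congrArg ULift.up (hgs n)⟩
  exact funext fun n => congrArg ULift.down (congrFun hlift n)

theorem exists_rank (h : IsLawvereNNO.{u, 0} o s) :
    ∃ r : N → ℕ, r o = 0 ∧ ∀ n, r (s n) = r n + 1 :=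
  (h ℕ 0 (· + 1)).exists

theorem exists_iterate_eq (h : IsLawvereNNO.{u, 0} o s) (x : N) : ∃ k, s^[k] o = x := by
  obtain ⟨r, hro, hrs⟩ := h.exists_rank
  by_contra ho
  have hancestor : (fun n => (r n, ∃ k, s^[k] n = x)) = fun n => (r n, False) :=
    (h (ℕ × Prop) (0, False) fun p => (p.1 + 1, p.2 ∧ p.1 ≠ r x)).unique
      ⟨Prod.ext hro (eq_false ho),
        fun n => Prod.ext (hrs n) (propext (exists_iterate_succ_eq_iff hrs n x))⟩
      ⟨Prod.ext hro rfl, fun n => Prod.ext (hrs n) (false_and _).symm⟩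
  have hx : (∃ k, s^[k] x = x) = False := congrArg Prod.snd (congrFun hancestor x)
  exact hx.mp ⟨0, rfl⟩

theorem isPeanoNNO (h : IsLawvereNNO.{u, v} o s) : IsPeanoNNO o s := by
  have h₀ : IsLawvereNNO.{u, 0} o s := of_max_universe.{u, 0, v} h
  obtain ⟨r, hro, hrs⟩ := h₀.exists_rank
  have iterate_rank : ∀ x, s^[r x] o = x := by
    intro x
    obtain ⟨k, rfl⟩ := h₀.exists_iterate_eq x
    rw [rank_iterate hrs, hro, zero_add]
  have rank_injective : Function.Injective r :=
    Function.LeftInverse.injective (g := fun k => s^[k] o) iterate_rank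
  refine ⟨fun n hn => ?_, fun m n hmn => rank_injective ?_, fun P hPo hPs x => ?_⟩
  · have := congrArg r hn
    rw [hrs, hro] at this
    exact Nat.succ_ne_zero _ this
  · have := congrArg r hmn
    rw [hrs, hrs] at this
    exact Nat.succ_injective this
  · rw [← iterate_rank x]
    exact Function.Iterate.rec P hPo hPs (r x)

end IsLawvereNNO

namespace IsPeanoNNO

variable {N : Type u} {o : N} {s : N → N}

theorem bijective_sumElim (h : IsPeanoNNO o s) :
    Function.Bijective (Sum.elim (fun _ : Unit => o) s) := by
  constructor
  · exact Function.Injective.sumElim (Function.injective_of_subsingleton _) h.succ_injective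
      fun _ n => (h.succ_ne_zero n).symm
  · exact h.induction _ ⟨Sum.inl (), rfl⟩ fun n _ => ⟨Sum.inr n, rfl⟩

theorem eqvGen_total (h : IsPeanoNNO o s) (a b : N) :
    Relation.EqvGen (fun n m => m = s n) a b := by
  have from_zero : ∀ n, Relation.EqvGen (fun n m => m = s n) o n :=
    h.induction _ (.refl o) fun n hn => .trans _ _ _ hn (.rel _ _ rfl)
  exact .trans _ _ _ (.symm _ _ (from_zero a)) (from_zero b)

theorem isFreydNNO (h : IsPeanoNNO o s) : IsFreydNNO o s :=
  ⟨h.bijective_sumElim, h.eqvGen_total⟩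

end IsPeanoNNO

/-- Every Lawvere natural number object in the category of types is a Freyd natural number
object: if for every `(X, b, u)` there is a unique `f : N → X` with `f o = b` and
`f (s n) = u (f n)`, then the map `Unit ⊕ N → N` sending the point to `o` and `n` to `s n` is
a bijection, and the equivalence relation generated by the pairs `(n, s n)` is total. -/
theorem lawvere_nno_is_freyd_nno {N : Type*} (o : N) (s : N → N)
    (h : ∀ (X : Type*) (b : X) (u : X → X),
      ∃! f : N → X, f o = b ∧ ∀ n, f (s n) = u (f n)) :
    Function.Bijective (Sum.elim (fun _ : Unit => o) s) ∧
      ∀ a b : N, Relation.EqvGen (fun n m => m = s n) a b := by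
  have lawvere : IsLawvereNNO o s := h
  have freyd : IsFreydNNO o s := lawvere.isPeanoNNO.isFreydNNO
  exact ⟨freyd.bijective_sumElim, freyd.eqvGen_total⟩
end
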